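/- Let d ≤ 3, let B be a Hermitian complex tensor of order 2d, and let f(U) = Σ_{k=1}^n Σ_{i₁,…,i_d,j₁,…,j_d} B_{i₁⋯i_d j₁⋯j_d} ∏_{m=1}^d conj(U_{i_m k}) ∏_{m=1}^d U_{j_m k} be its trace form. Then for every U ∈ U(n) and every pair 1 ≤ i < j ≤ n, there exists a real symmetric 3×3 matrix Γ such that for all c, s₁, s₂ ∈ ℝ with c² + s₁² + s₂² = 1, f(U G(i,j,Ψ(c,s₁,s₂))) = r(c,s₁,s₂)^T Γ r(c,s₁,s₂). -/

import Mathlib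

open Matrix BigOperators Filter

/-- Plane transformation `G(i,j,Ψ)`: identity except that the 2×2 submatrix formed
by rows and columns `(i,j)` equals `Ψ`. -/
noncomputable def planeG (n : ℕ) (i j : Fin n) (Ψ : Matrix (Fin 2) (Fin 2) ℂ) :
    Matrix (Fin n) (Fin n) ℂ :=
  fun a b =>
    if a = i ∧ b = i then Ψ 0 0
    else if a = i ∧ b = j then Ψ 0 1
    else if a = j ∧ b = i then Ψ 1 0
    else if a = j ∧ b = j then Ψ 1 1
    else if a = b then 1 else 0

/-- The 2×2 unitary matrix `Ψ(c,s₁,s₂) = [[c, −(s₁+is₂)], [s₁−is₂, c]]`. -/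
noncomputable def PsiM (c s₁ s₂ : ℝ) : Matrix (Fin 2) (Fin 2) ℂ :=
  !![(c : ℂ), -((s₁ : ℂ) + (s₂ : ℂ) * Complex.I);
     (s₁ : ℂ) - (s₂ : ℂ) * Complex.I, (c : ℂ)]

/-- The vector `r(c,s₁,s₂) = (2c²−1, −2cs₁, −2cs₂)`. -/
noncomputable def rVec (c s₁ s₂ : ℝ) : Fin 3 → ℝ :=
  ![2 * c ^ 2 - 1, -(2 * c * s₁), -(2 * c * s₂)]

/-!
For a unit vector `ψ : ℂ²`, the rank-one matrix `conj ψ ⊗ ψ` is `(1 + r · σ) / 2`, where the Bloch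
vector `r` is a real unit vector and `r · σ` is traceless, linear in `r`. The two columns of
`Ψ(c, s₁, s₂)` are orthogonal, so their Bloch vectors are opposite, namely `r` and `-r` with
`r = r(c, s₁, s₂)`. Hence the columns `i` and `j` of `U * G(i, j, Ψ)` have rank-one matrices
`A + L r` and `A - L r` with `L` linear, whereas the other columns are those of `U`. The trace form
is a sum over the columns of a form of degree `d` in these rank-one matrices, so it is a constant
plus twice the even part of a polynomial of degree `d ≤ 3` in `r`; this leaves only terms of degrees
`0` and `2`, and constants are multiples of the quadratic form `r ⬝ᵥ r = 1`.
-/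

section EvenPart

variable {R κ : Type*} [CommRing R]

lemma prod_add_add_prod_sub_eq_sum_even [DecidableEq κ] (s : Finset κ) (a b : κ → R) :
    ∏ m ∈ s, (a m + b m) + ∏ m ∈ s, (a m - b m) =
      ∑ t ∈ s.powerset with Even t.card, 2 * (∏ m ∈ s \ t, a m) * ∏ m ∈ t, b m := by
  simp only [add_comm (a _), Finset.prod_add, Finset.prod_sub, ← Finset.sum_add_distrib,
    Finset.sum_filter]
  refine Finset.sum_congr rfl fun t _ ↦ ?_
  split_ifs with ht
  · rw [ht.neg_one_pow]
    ring
  · rw [(Nat.not_even_iff_odd.mp ht).neg_one_pow]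
    ring

variable {M : Type*} [AddCommGroup M] [Module R M]

lemma exists_quadraticForm_eq_prod_of_even (Q₀ : QuadraticForm R M) (l : κ → Module.Dual R M)
    {t : Finset κ} (ht_even : Even t.card) (ht : t.card ≤ 3) :
    ∃ Q : QuadraticForm R M, ∀ x, Q₀ x = 1 → ∏ m ∈ t, l m x = Q x := by
  classical
  obtain h_zero | h_two : t.card = 0 ∨ t.card = 2 := by grind
  · refine ⟨Q₀, fun x hx ↦ ?_⟩
    rw [Finset.card_eq_zero.mp h_zero, Finset.prod_empty, hx]
  · obtain ⟨p, q, hpq, rfl⟩ := Finset.card_eq_two.mp h_two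
    exact ⟨QuadraticMap.linMulLin (l p) (l q), fun x _ ↦ Finset.prod_pair hpq⟩

lemma exists_quadraticForm_eq_prod_add_add_prod_sub (Q₀ : QuadraticForm R M) {s : Finset κ}
    (hs : s.card ≤ 3) (a : κ → R) (l : κ → Module.Dual R M) :
    ∃ Q : QuadraticForm R M, ∀ x, Q₀ x = 1 →
      ∏ m ∈ s, (a m + l m x) + ∏ m ∈ s, (a m - l m x) = Q x := by
  classical
  have h_even : ∀ t ∈ s.powerset.filter (Even ·.card),
      ∃ Q : QuadraticForm R M, ∀ x, Q₀ x = 1 → ∏ m ∈ t, l m x = Q x := fun t ht ↦ by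
    obtain ⟨hts, ht⟩ := Finset.mem_filter.mp ht
    exact exists_quadraticForm_eq_prod_of_even Q₀ l ht
      ((Finset.card_le_card (Finset.mem_powerset.mp hts)).trans hs)
  choose! Q hQ using h_even
  refine ⟨∑ t ∈ s.powerset with Even t.card, (2 * ∏ m ∈ s \ t, a m) • Q t, fun x hx ↦ ?_⟩
  rw [prod_add_add_prod_sub_eq_sum_even, _root_.sum_apply]
  exact Finset.sum_congr rfl fun t ht ↦ by rw [hQ t ht x hx, _root_.smul_apply, smul_eq_mul]

end EvenPart

section TensorForm

variable {κ α ν : Type*} [Fintype κ] [DecidableEq κ] [Fintype α] [Fintype ν]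

/-- The homogeneous form of degree `card κ` on matrices with coefficient tensor `B`, the index
families `iv` and `jv` of `B` selecting rows and columns respectively. -/
def tensorForm {R : Type*} [CommSemiring R] (B : (κ → α) → (κ → α) → R) (P : Matrix α α R) :
    R :=
  ∑ iv, ∑ jv, B iv jv * ∏ m, P (iv m) (jv m)

/-- The trace form of the tensor `B`: the sum of the values of `B` at the columns of `U`. The
matrix `U` may be rectangular. -/
def traceForm {R : Type*} [CommSemiring R] [StarRing R] (B : (κ → α) → (κ → α) → R)
    (U : Matrix α ν R) : R :=
  ∑ k, ∑ iv, ∑ jv, B iv jv * (∏ m, starRingEnd R (U (iv m) k)) * ∏ m, U (jv m) k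

lemma traceForm_eq_sum_tensorForm {R : Type*} [CommSemiring R] [StarRing R]
    (B : (κ → α) → (κ → α) → R) (U : Matrix α ν R) :
    traceForm B U = ∑ k, tensorForm B (vecMulVec (star (U.col k)) (U.col k)) := by
  simp only [traceForm, tensorForm, vecMulVec_apply, Finset.prod_mul_distrib, mul_assoc,
    Pi.star_apply, col_apply, starRingEnd_apply]

lemma exists_quadraticForm_eq_tensorForm_add_add_tensorForm_sub {R M : Type*} [CommRing R]
    [AddCommGroup M] [Module R M] (hκ : Fintype.card κ ≤ 3) (B : (κ → α) → (κ → α) → R)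
    (Q₀ : QuadraticForm R M) (A : Matrix α α R) (L : M →ₗ[R] Matrix α α R) :
    ∃ Q : QuadraticForm R M, ∀ x, Q₀ x = 1 →
      tensorForm B (A + L x) + tensorForm B (A - L x) = Q x := by
  choose Q hQ using fun iv jv : κ → α ↦
    exists_quadraticForm_eq_prod_add_add_prod_sub Q₀ (s := Finset.univ) hκ
      (fun m ↦ A (iv m) (jv m)) fun m ↦ Matrix.entryLinearMap R R (iv m) (jv m) ∘ₗ L
  refine ⟨∑ iv, ∑ jv, B iv jv • Q iv jv, fun x hx ↦ ?_⟩
  simp only [_root_.sum_apply, _root_.smul_apply, ← hQ _ _ x hx, smul_eq_mul, mul_add,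
    Finset.sum_add_distrib, tensorForm, Matrix.add_apply, Matrix.sub_apply, LinearMap.comp_apply,
    Matrix.entryLinearMap_apply]

end TensorForm

section MatrixRepresentation

variable {ν : Type*} [Fintype ν]

lemma dotProduct_toMatrix'_mulVec [DecidableEq ν] {R : Type*} [CommRing R] [Invertible (2 : R)]
    (Q : QuadraticForm R (ν → R)) (x : ν → R) : x ⬝ᵥ (Q.toMatrix' *ᵥ x) = Q x := by
  rw [← Matrix.toLinearMap₂'_apply', QuadraticForm.toMatrix', Matrix.toLinearMap₂'_toMatrix',
    QuadraticMap.associated_eq_self_apply]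

lemma re_ofReal_dotProduct_mulVec_ofReal (Γ : Matrix ν ν ℂ) (r : ν → ℝ) :
    (((↑) ∘ r : ν → ℂ) ⬝ᵥ (Γ *ᵥ ((↑) ∘ r))).re = r ⬝ᵥ (Γ.map Complex.re *ᵥ r) := by
  simp only [dotProduct, mulVec, Function.comp_apply, Complex.re_sum, Complex.re_ofReal_mul,
    Complex.re_mul_ofReal, map_apply]

end MatrixRepresentation

lemma vecMulVec_star_col_mul {R α β γ : Type*} [CommSemiring R] [StarRing R] [Fintype β]
    (W : Matrix α β R) (Ψ : Matrix β γ R) (q : γ) :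
    vecMulVec (star ((W * Ψ).col q)) ((W * Ψ).col q) =
      Wᴴᵀ * vecMulVec (star (Ψ.col q)) (Ψ.col q) * Wᵀ := by
  rw [mul_vecMulVec, vecMulVec_mul, mulVec_transpose, vecMul_transpose, ← star_mulVec]
  rfl

section Bloch

/-- The traceless matrix `r · σ` with Bloch vector `r`. The Pauli matrices and their signs are
chosen so that `(1 + r · σ) / 2` is the rank-one matrix `conj ψ ⊗ ψ` of the first column `ψ` of
`Ψ(c, s₁, s₂)` when `r = r(c, s₁, s₂)`. -/
noncomputable def blochMatrix : (Fin 3 → ℂ) →ₗ[ℂ] Matrix (Fin 2) (Fin 2) ℂ where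
  toFun r := !![r 0, -r 1 + Complex.I * r 2; -r 1 - Complex.I * r 2, -r 0]
  map_add' x y := by
    ext p q
    fin_cases p <;> fin_cases q <;> simp <;> ring
  map_smul' z x := by
    ext p q
    fin_cases p <;> fin_cases q <;> simp <;> ring

variable {c s₁ s₂ : ℝ}

lemma rVec_dotProduct_self (h : c ^ 2 + s₁ ^ 2 + s₂ ^ 2 = 1) :
    rVec c s₁ s₂ ⬝ᵥ rVec c s₁ s₂ = 1 := by
  simp only [rVec, dotProduct, Fin.sum_univ_three, cons_val]
  linear_combination 4 * c ^ 2 * h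

lemma blochMatrix_rVec (c s₁ s₂ : ℝ) : blochMatrix ((↑) ∘ rVec c s₁ s₂) =
    !![2 * (c : ℂ) ^ 2 - 1, 2 * c * (s₁ - s₂ * Complex.I);
       2 * c * (s₁ + s₂ * Complex.I), 1 - 2 * (c : ℂ) ^ 2] := by
  ext p q
  fin_cases p <;> fin_cases q <;> simp [blochMatrix, rVec] <;> ring

lemma vecMulVec_star_PsiM_col_zero (h : c ^ 2 + s₁ ^ 2 + s₂ ^ 2 = 1) :
    vecMulVec (star ((PsiM c s₁ s₂).col 0)) ((PsiM c s₁ s₂).col 0) =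
      (1 / 2 : ℂ) • (1 + blochMatrix ((↑) ∘ rVec c s₁ s₂)) := by
  have hℂ : (c : ℂ) ^ 2 + s₁ ^ 2 + s₂ ^ 2 = 1 := mod_cast h
  have h_col : (PsiM c s₁ s₂).col 0 = ![(c : ℂ), s₁ - s₂ * Complex.I] := by
    ext p; fin_cases p <;> rfl
  have h_star : star ![(c : ℂ), s₁ - s₂ * Complex.I] = ![(c : ℂ), s₁ + s₂ * Complex.I] := by
    ext p; fin_cases p <;> simp
  simp only [h_col, h_star, blochMatrix_rVec, one_fin_two, ← Matrix.ext_iff, Fin.forall_fin_two,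
    vecMulVec_apply, Matrix.smul_apply, Matrix.add_apply, of_apply, cons_val, smul_eq_mul]
  refine ⟨⟨by ring, by ring⟩, by ring, ?_⟩
  linear_combination hℂ - (s₂ : ℂ) ^ 2 * Complex.I_sq

lemma vecMulVec_star_PsiM_col_one (h : c ^ 2 + s₁ ^ 2 + s₂ ^ 2 = 1) :
    vecMulVec (star ((PsiM c s₁ s₂).col 1)) ((PsiM c s₁ s₂).col 1) =
      (1 / 2 : ℂ) • (1 - blochMatrix ((↑) ∘ rVec c s₁ s₂)) := by
  have hℂ : (c : ℂ) ^ 2 + s₁ ^ 2 + s₂ ^ 2 = 1 := mod_cast h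
  have h_col : (PsiM c s₁ s₂).col 1 = ![-(s₁ + s₂ * Complex.I), (c : ℂ)] := by
    ext p; fin_cases p <;> rfl
  have h_star : star ![-(s₁ + s₂ * Complex.I), (c : ℂ)] = ![-(s₁ - s₂ * Complex.I), (c : ℂ)] := by
    ext p; fin_cases p <;> simp [sub_eq_add_neg, add_comm]
  simp only [h_col, h_star, blochMatrix_rVec, one_fin_two, ← Matrix.ext_iff, Fin.forall_fin_two,
    vecMulVec_apply, Matrix.smul_apply, Matrix.sub_apply, of_apply, cons_val, smul_eq_mul]
  refine ⟨⟨?_, by ring⟩, by ring, by ring⟩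
  linear_combination hℂ - (s₂ : ℂ) ^ 2 * Complex.I_sq

end Bloch

section PlaneTransformation

variable {n : ℕ} {α : Type*} {i j : Fin n}

lemma submatrix_mul_planeG (hij : i ≠ j) (U : Matrix α (Fin n) ℂ)
    (Ψ : Matrix (Fin 2) (Fin 2) ℂ) :
    (U * planeG n i j Ψ).submatrix id ![i, j] = U.submatrix id ![i, j] * Ψ := by
  ext p q
  rw [submatrix_apply, mul_apply, mul_apply, Fintype.sum_eq_add i j hij, Fin.sum_univ_two]
  · fin_cases q <;> simp [planeG, hij, hij.symm]
  · rintro x ⟨hxi, hxj⟩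
    fin_cases q <;> simp [planeG, hxi, hxj]

lemma col_mul_planeG_of_ne (U : Matrix α (Fin n) ℂ) (Ψ : Matrix (Fin 2) (Fin 2) ℂ) {k : Fin n}
    (hki : k ≠ i) (hkj : k ≠ j) : (U * planeG n i j Ψ).col k = U.col k := by
  ext p
  rw [col_apply, col_apply, mul_apply, Fintype.sum_eq_single k]
  · simp [planeG, hki, hkj]
  · intro x hx
    simp [planeG, hx, hki, hkj]

lemma traceForm_mul_planeG {κ : Type*} [Fintype κ] [DecidableEq κ] [Fintype α] (hij : i ≠ j)
    (B : (κ → α) → (κ → α) → ℂ) (U : Matrix α (Fin n) ℂ) (Ψ : Matrix (Fin 2) (Fin 2) ℂ) :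
    let V := U * planeG n i j Ψ
    traceForm B V = tensorForm B (vecMulVec (star (V.col i)) (V.col i)) +
      tensorForm B (vecMulVec (star (V.col j)) (V.col j)) +
      ∑ k ∈ {i, j}ᶜ, tensorForm B (vecMulVec (star (U.col k)) (U.col k)) := by
  intro V
  have h_other : ∀ k ∈ ({i, j}ᶜ : Finset (Fin n)), V.col k = U.col k := fun k hk ↦ by
    obtain ⟨hki, hkj⟩ : k ≠ i ∧ k ≠ j := by simpa using hk
    exact col_mul_planeG_of_ne U Ψ hki hkj
  rw [traceForm_eq_sum_tensorForm, ← Finset.sum_add_sum_compl {i, j}, Finset.sum_pair hij]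
  exact congrArg _ (Finset.sum_congr rfl fun k hk ↦ by rw [h_other k hk])

lemma exists_vecMulVec_star_col_mul_planeG (hij : i ≠ j) (U : Matrix α (Fin n) ℂ) :
    ∃ (A : Matrix α α ℂ) (L : (Fin 3 → ℂ) →ₗ[ℂ] Matrix α α ℂ),
      ∀ c s₁ s₂ : ℝ, c ^ 2 + s₁ ^ 2 + s₂ ^ 2 = 1 →
        let V := U * planeG n i j (PsiM c s₁ s₂)
        vecMulVec (star (V.col i)) (V.col i) = A + L ((↑) ∘ rVec c s₁ s₂) ∧
        vecMulVec (star (V.col j)) (V.col j) = A - L ((↑) ∘ rVec c s₁ s₂) := by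
  set W := U.submatrix id ![i, j]
  refine ⟨(1 / 2 : ℂ) • (Wᴴᵀ * Wᵀ), (1 / 2 : ℂ) • (mulRightLinearMap α ℂ Wᵀ ∘ₗ
    mulLeftLinearMap (Fin 2) ℂ Wᴴᵀ ∘ₗ blochMatrix), fun c s₁ s₂ h ↦ ?_⟩
  intro V
  have hV : V.submatrix id ![i, j] = W * PsiM c s₁ s₂ := submatrix_mul_planeG hij U _
  have hVi : V.col i = (W * PsiM c s₁ s₂).col 0 := by rw [← hV]; rfl
  have hVj : V.col j = (W * PsiM c s₁ s₂).col 1 := by rw [← hV]; rfl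
  rw [hVi, hVj, vecMulVec_star_col_mul, vecMulVec_star_col_mul, vecMulVec_star_PsiM_col_zero h,
    vecMulVec_star_PsiM_col_one h]
  simp [Matrix.mul_add, Matrix.add_mul, Matrix.mul_sub, Matrix.sub_mul, smul_sub]

end PlaneTransformation

theorem trace_form_plane_restriction_quadratic_general {n : ℕ} {κ α : Type*} [Fintype κ]
    [DecidableEq κ] [Fintype α] (hκ : Fintype.card κ ≤ 3) (B : (κ → α) → (κ → α) → ℂ)
    (U : Matrix α (Fin n) ℂ) {i j : Fin n} (hij : i ≠ j) :
    ∃ Γ : Matrix (Fin 3) (Fin 3) ℂ, Γᵀ = Γ ∧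
      ∀ c s₁ s₂ : ℝ, c ^ 2 + s₁ ^ 2 + s₂ ^ 2 = 1 →
        traceForm B (U * planeG n i j (PsiM c s₁ s₂)) =
          ((↑) ∘ rVec c s₁ s₂) ⬝ᵥ (Γ *ᵥ ((↑) ∘ rVec c s₁ s₂)) := by
  obtain ⟨A, L, hAL⟩ := exists_vecMulVec_star_col_mul_planeG hij U
  let Q₀ : QuadraticForm ℂ (Fin 3 → ℂ) := QuadraticMap.weightedSumSquares ℂ (1 : Fin 3 → ℂ)
  obtain ⟨Q, hQ⟩ := exists_quadraticForm_eq_tensorForm_add_add_tensorForm_sub hκ B Q₀ A L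
  let C := ∑ k ∈ {i, j}ᶜ, tensorForm B (vecMulVec (star (U.col k)) (U.col k))
  refine ⟨(Q + C • Q₀).toMatrix', QuadraticForm.isSymm_toMatrix' _, fun c s₁ s₂ h ↦ ?_⟩
  obtain ⟨hVi, hVj⟩ := hAL c s₁ s₂ h
  have hQ₀ : Q₀ ((↑) ∘ rVec c s₁ s₂) = 1 := by
    simpa [Q₀, dotProduct] using congrArg Complex.ofReal (rVec_dotProduct_self h)
  rw [dotProduct_toMatrix'_mulVec, _root_.add_apply, _root_.smul_apply, hQ₀, ← hQ _ hQ₀,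
    smul_eq_mul, mul_one, traceForm_mul_planeG hij, hVi, hVj]

/-- For `d ≤ 3` and a Hermitian tensor `B` of order `2d` with trace form `f`, the
restriction of `f` to any plane `(i,j)` at any unitary `U` is a quadratic form:
`f(U G(i,j,Ψ(c,s₁,s₂))) = r(c,s₁,s₂)ᵀ Γ r(c,s₁,s₂)` for some real symmetric
3×3 matrix `Γ`. -/
theorem trace_form_plane_restriction_quadratic {n d : ℕ} (hd : d ≤ 3)
    (B : (Fin d → Fin n) → (Fin d → Fin n) → ℂ)
    (hB : ∀ iv jv, B iv jv = (starRingEnd ℂ) (B jv iv))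
    (f : Matrix (Fin n) (Fin n) ℂ → ℝ)
    (hf : ∀ U : Matrix (Fin n) (Fin n) ℂ, f U =
      (∑ k : Fin n, ∑ iv : Fin d → Fin n, ∑ jv : Fin d → Fin n,
        B iv jv * (∏ m, (starRingEnd ℂ) (U (iv m) k)) * ∏ m, U (jv m) k).re)
    (U : Matrix (Fin n) (Fin n) ℂ) (hU : Uᴴ * U = 1)
    (i j : Fin n) (hij : i < j) :
    ∃ Γ : Matrix (Fin 3) (Fin 3) ℝ, Γᵀ = Γ ∧
      ∀ c s₁ s₂ : ℝ, c ^ 2 + s₁ ^ 2 + s₂ ^ 2 = 1 →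
        f (U * planeG n i j (PsiM c s₁ s₂)) =
          rVec c s₁ s₂ ⬝ᵥ (Γ *ᵥ rVec c s₁ s₂) := by
  obtain ⟨Γ, hΓ, h⟩ := trace_form_plane_restriction_quadratic_general
    ((Fintype.card_fin d).trans_le hd) B U hij.ne
  refine ⟨Γ.map Complex.re, by rw [← transpose_map, hΓ], fun c s₁ s₂ hc ↦ ?_⟩
  rw [← re_ofReal_dotProduct_mulVec_ofReal, ← h c s₁ s₂ hc, hf, traceForm]
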